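/- Let ζ be a primitive aperiodic binary substitution of constant length q ≥ 2. Then for every y ∈ X_ζ and every m, ℓ ∈ ℕ, the asymptotic recurrence rates RR_ℓ(y^{(m)},∞,2^{-h}) and RR_{ℓ+1}(y^{(m)},∞,2^{-h}) exist for all h ∈ ℕ and lim_{h→∞} RR_{ℓ+1}(y^{(m)},∞,2^{-h}) / RR_ℓ(y^{(m)},∞,2^{-h}) = 1. -/

import Mathlib

open Filter Topology MeasureTheory

namespace RQA

/-- The standard metric on symbolic sequences over an alphabet `α`:
`ρ(x,y) = 2^{-min{i : x i ≠ y i}}` for `x ≠ y` and `ρ(x,x) = 0`. -/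
noncomputable def seqDist {α : Type*} (x y : ℕ → α) : ℝ :=
  haveI := Classical.propDecidable (x = y)
  if x = y then 0 else (2 : ℝ) ^ (-((sInf {i : ℕ | x i ≠ y i} : ℕ) : ℤ))

/-- The (one-sided) shift on sequences. -/
def shift {α : Type*} (x : ℕ → α) : ℕ → α := fun i => x (i + 1)

/-- The embedded sequence `x^{(m)}`, a sequence over the alphabet `α^m`. -/
def embedSeq {α : Type*} (m : ℕ) (x : ℕ → α) : ℕ → (Fin m → α) :=
  fun j t => x (j + (t : ℕ))

section RQAdefs

variable {X : Type*} (d : X → X → ℝ) (f : X → X) (x : X)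

/-- The entry of the recurrence plot at `(i,j)` equals `1`. -/
def RPone (ε : ℝ) (i j : ℕ) : Prop := d (f^[i] x) (f^[j] x) ≤ ε

/-- `(i, j, l)` is a diagonal line in the recurrence plot `RP(x, n, ε)`. -/
def IsLine (n : ℕ) (ε : ℝ) (i j l : ℕ) : Prop :=
  1 ≤ l ∧ i + l ≤ n ∧ j + l ≤ n ∧ i ≠ j ∧
  (∀ h, h < l → RPone d f x ε (i + h) (j + h)) ∧
  (0 < i → 0 < j → ¬ RPone d f x ε (i - 1) (j - 1)) ∧
  (max i j + l < n → ¬ RPone d f x ε (i + l) (j + l))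

/-- `N_l(x, n, ε)`: the number of diagonal lines of length exactly `l`. -/
noncomputable def Nlines (n : ℕ) (ε : ℝ) (l : ℕ) : ℕ :=
  Set.ncard {p : ℕ × ℕ | IsLine d f x n ε p.1 p.2 l}

/-- `P_l(x, n, ε) = N_l/(n² − n)`. -/
noncomputable def Pline (n : ℕ) (ε : ℝ) (l : ℕ) : ℝ :=
  (Nlines d f x n ε l : ℝ) / ((n : ℝ) ^ 2 - (n : ℝ))

/-- `P≥_ℓ(x, n, ε) = Σ_{l ≥ ℓ} P_l`. -/
noncomputable def PlineGe (n : ℕ) (ε : ℝ) (ℓ : ℕ) : ℝ :=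
  ∑' k : ℕ, Pline d f x n ε (ℓ + k)

/-- The recurrence rate `RR_ℓ(x, n, ε) = Σ_{l ≥ ℓ} l · P_l`. -/
noncomputable def RRate (n : ℕ) (ε : ℝ) (ℓ : ℕ) : ℝ :=
  ∑' k : ℕ, ((ℓ + k : ℕ) : ℝ) * Pline d f x n ε (ℓ + k)

/-- The determinism `DET_ℓ(x, n, ε) = RR_ℓ/RR_1`. -/
noncomputable def DETrm (n : ℕ) (ε : ℝ) (ℓ : ℕ) : ℝ :=
  RRate d f x n ε ℓ / RRate d f x n ε 1

/-- The average line length `L_ℓ(x, n, ε) = RR_ℓ/P≥_ℓ`. -/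
noncomputable def LAvg (n : ℕ) (ε : ℝ) (ℓ : ℕ) : ℝ :=
  RRate d f x n ε ℓ / PlineGe d f x n ε ℓ

/-- The entropy of line lengths
`ENT_ℓ(x, n, ε) = log P≥_ℓ − (1/P≥_ℓ)·Σ_{l≥ℓ} P_l · log P_l` (with `0·log 0 = 0`). -/
noncomputable def ENTln (n : ℕ) (ε : ℝ) (ℓ : ℕ) : ℝ :=
  Real.log (PlineGe d f x n ε ℓ) -
    (PlineGe d f x n ε ℓ)⁻¹ *
      ∑' k : ℕ, Pline d f x n ε (ℓ + k) * Real.log (Pline d f x n ε (ℓ + k))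

/-- The correlation sum
`C_ℓ(x, n, ε) = n^{-2}·#{(i,j) ∈ [0,n)² : d_ℓ(f^i x, f^j x) ≤ ε}`,
where `d_ℓ` is the Bowen metric. -/
noncomputable def corrSum (ℓ n : ℕ) (ε : ℝ) : ℝ :=
  (Set.ncard {p : ℕ × ℕ | p.1 < n ∧ p.2 < n ∧
      ∀ k, k < ℓ → d (f^[p.1 + k] x) (f^[p.2 + k] x) ≤ ε} : ℝ) / (n : ℝ) ^ 2

end RQAdefs

/-- The extension of a substitution to a morphism of the free monoid of finite words. -/
def substWord (ζ : Bool → List Bool) : List Bool → List Bool :=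
  fun w => w.foldr (fun a r => ζ a ++ r) []

/-- `ζ` is a (binary) substitution of constant length `q ≥ 2`. -/
def IsConstLenSubst (ζ : Bool → List Bool) (q : ℕ) : Prop :=
  2 ≤ q ∧ ∀ a : Bool, (ζ a).length = q

/-- The language `L_ζ`: subwords of the words `ζ^k(a)`, `a ∈ A`, `k ≥ 1`. -/
def substLang (ζ : Bool → List Bool) : Set (List Bool) :=
  {w | ∃ a : Bool, ∃ k : ℕ, 1 ≤ k ∧ w <:+: (substWord ζ)^[k] [a]}

/-- The substitution subshift `X_ζ`. -/
def SubstShift (ζ : Bool → List Bool) : Set (ℕ → Bool) :=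
  {y | ∀ n : ℕ, (List.ofFn fun t : Fin n => y (t : ℕ)) ∈ substLang ζ}

/-- `ζ` is primitive. -/
def IsPrimitive (ζ : Bool → List Bool) : Prop :=
  ∃ k : ℕ, 1 ≤ k ∧ ∀ a b : Bool, b ∈ (substWord ζ)^[k] [a]

/-- `ζ` is aperiodic: `X_ζ` contains a non-periodic sequence. -/
def IsAperiodic (ζ : Bool → List Bool) : Prop :=
  ∃ y ∈ SubstShift ζ, ∀ p : ℕ, 1 ≤ p → ∃ i : ℕ, y (i + p) ≠ y i

/-- The action of a constant length-`q` substitution on infinite sequences. -/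
def substSeq (ζ : Bool → List Bool) (q : ℕ) (x : ℕ → Bool) : ℕ → Bool :=
  fun i => (ζ (x (i / q))).getD (i % q) false

/-- `(i, j, l)` is a line in the infinite symbolic recurrence plot `RP(x, ∞, ε₀)`. -/
def IsInfLine (x : ℕ → Bool) (i j l : ℕ) : Prop :=
  1 ≤ l ∧ i ≠ j ∧ (∀ h, h < l → x (i + h) = x (j + h)) ∧
  (0 < i → 0 < j → x (i - 1) ≠ x (j - 1)) ∧ x (i + l) ≠ x (j + l)

/-- `K_l`: the set of starting points `(i,j)`, `i,j ≥ 1`, of inner lines of length `l`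
in the infinite symbolic recurrence plot. -/
def Kset (x : ℕ → Bool) (l : ℕ) : Set (ℕ × ℕ) :=
  {p | 1 ≤ p.1 ∧ 1 ≤ p.2 ∧ IsInfLine x p.1 p.2 l}

/-- `#(M ∩ [0,n)²)/n²`. -/
noncomputable def densCount (M : Set (ℕ × ℕ)) (n : ℕ) : ℝ :=
  (Set.ncard (M ∩ {p : ℕ × ℕ | p.1 < n ∧ p.2 < n}) : ℝ) / (n : ℝ) ^ 2

/-- `M ⊆ ℕ²` has asymptotic density `a`. -/
def HasDens (M : Set (ℕ × ℕ)) (a : ℝ) : Prop :=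
  Tendsto (densCount M) atTop (𝓝 a)

/-- `δ_l(n) = #(K_l ∩ [1,n)²)/(n² − n)`. -/
noncomputable def deltaK (x : ℕ → Bool) (l n : ℕ) : ℝ :=
  (Set.ncard (Kset x l ∩ {p : ℕ × ℕ | p.1 < n ∧ p.2 < n}) : ℝ) / ((n : ℝ) ^ 2 - (n : ℝ))

/-- `M` is a minimal subset of the subshift `Y`. -/
def IsMinimalSubset (Y M : Set (ℕ → Bool)) : Prop :=
  M ⊆ Y ∧ M.Nonempty ∧ IsClosed M ∧ (∀ z ∈ M, shift z ∈ M) ∧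
  ∀ M' : Set (ℕ → Bool), M' ⊆ M → M'.Nonempty → IsClosed M' →
    (∀ z ∈ M', shift z ∈ M') → M' = M

end RQA

open RQA

/-!
Let `c L` be the density in `ℕ²` of the pairs of positions at which the same word of length `L`
starts in `y`. Counting runs of recurrences instead of maximal lines turns the recurrence rate into
a telescoping sum, and `RR_ℓ(y^(m), ∞, 2^(-h)) = ℓ * c L - (ℓ - 1) * c (L + 1)` with
`L = h + m + ℓ - 2`.

Every point of a primitive constant length substitution shift is linearly recurrent. For such `y`
the frequencies of words, and with them `c L`, exist by Fekete's lemma. Only `O(L)` words of length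
`L` occur, so `c L` is at least of order `1 / L` by Cauchy–Schwarz. Since `c` is nonincreasing and
convex, `L * (c L - c (L + 1))` tends to `0`; hence `c (L + 1) / c L` tends to `1`, and so does the
ratio of recurrence rates.
-/

namespace RQA

section Words

variable {α : Type*} {x y : ℕ → α} {i j : ℕ}

lemma embedSeq_eq_iff {L : ℕ} :
    embedSeq L x i = embedSeq L y j ↔ ∀ t < L, x (i + t) = y (j + t) := by
  simp only [funext_iff, embedSeq, Fin.forall_iff]

lemma embedSeq_embedSeq_eq_iff {k L : ℕ} (hk : 1 ≤ k) (hL : 1 ≤ L) :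
    embedSeq k (embedSeq L x) i = embedSeq k (embedSeq L y) j ↔
      embedSeq (k + L - 1) x i = embedSeq (k + L - 1) y j := by
  simp only [embedSeq_eq_iff]
  constructor
  · intro h t ht
    have hsplit := h (min t (k - 1)) (by omega) (t - min t (k - 1)) (by omega)
    simpa only [add_assoc, Nat.add_sub_cancel' (min_le_left t (k - 1))] using hsplit
  · intro h s hs t ht
    simpa only [add_assoc] using h (s + t) (by omega)

lemma shift_iterate_apply (x : ℕ → α) (i t : ℕ) : shift^[i] x t = x (i + t) := by
  induction i generalizing t with
  | zero => rw [Function.iterate_zero_apply, zero_add]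
  | succ i ih => rw [Function.iterate_succ_apply', shift, ih, add_right_comm, add_assoc]

lemma seqDist_le_two_zpow_neg_iff {h : ℕ} :
    seqDist x y ≤ (2 : ℝ) ^ (-(h : ℤ)) ↔ ∀ t < h, x t = y t := by
  by_cases hxy : x = y
  · subst hxy
    simp only [seqDist, if_true, implies_true, iff_true]
    positivity
  · have hne : {i | x i ≠ y i}.Nonempty := Function.ne_iff.1 hxy
    rw [seqDist, if_neg hxy, zpow_le_zpow_iff_right₀ one_lt_two, neg_le_neg_iff, Nat.cast_le,
      le_csInf_iff'' hne]
    exact ⟨fun hle t ht => by_contra fun hc => ht.not_ge (hle t hc),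
      fun hall t ht => le_of_not_gt fun hlt => ht (hall t hlt)⟩

lemma RPone_embedSeq_iff {m h : ℕ} (hm : 1 ≤ m) (hh : 1 ≤ h) :
    RPone seqDist shift (embedSeq m y) ((2 : ℝ) ^ (-(h : ℤ))) i j ↔
      embedSeq (h + m - 1) y i = embedSeq (h + m - 1) y j := by
  rw [← embedSeq_embedSeq_eq_iff hh hm, embedSeq_eq_iff, RPone, seqDist_le_two_zpow_neg_iff]
  simp only [shift_iterate_apply]

end Words

section LinearRecurrence

variable {α β : Type*} {y : ℕ → α} {R : ℕ}

/-- Linear recurrence with constant `R`: every word of length `L` that occurs in `y` also occurs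
starting at one of the positions `j, …, j + R * L`, for every `j`. -/
def IsLinearlyRecurrent (R : ℕ) (y : ℕ → α) : Prop :=
  ∀ i j L, ∃ t ∈ Set.Icc j (j + R * L), embedSeq L y t = embedSeq L y i

lemma IsLinearlyRecurrent.comp (hy : IsLinearlyRecurrent R y) (g : α → β) :
    IsLinearlyRecurrent R (g ∘ y) := by
  intro i j L
  obtain ⟨t, ht, heq⟩ := hy i j L
  exact ⟨t, ht, embedSeq_eq_iff.2 fun s hs => congrArg g (embedSeq_eq_iff.1 heq s hs)⟩

lemma IsLinearlyRecurrent.isLinearlyRecurrent_embedSeq (hy : IsLinearlyRecurrent R y) (L : ℕ) :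
    IsLinearlyRecurrent (R * (L + 1)) (embedSeq L y) := by
  intro i j k
  rcases k.eq_zero_or_pos with rfl | hk
  · exact ⟨j, by simp, Subsingleton.elim _ _⟩
  obtain ⟨t, ⟨hjt, htj⟩, heq⟩ := hy i j (k + L)
  have hlen : k + L ≤ (L + 1) * k := by nlinarith
  refine ⟨t, ⟨hjt, htj.trans ?_⟩, ?_⟩
  · rw [mul_assoc]
    gcongr
  · refine embedSeq_eq_iff.2 fun s hs => embedSeq_eq_iff.2 fun r hr => ?_
    simpa only [add_assoc] using embedSeq_eq_iff.1 heq (s + r) (by omega)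

lemma IsLinearlyRecurrent.exists_finset_embedSeq_mem (hy : IsLinearlyRecurrent R y) (L : ℕ) :
    ∃ T : Finset (Fin L → α), T.card ≤ R * L + 1 ∧ ∀ i, embedSeq L y i ∈ T := by
  classical
  refine ⟨(Finset.range (R * L + 1)).image (embedSeq L y), ?_, fun i => ?_⟩
  · exact Finset.card_image_le.trans_eq (Finset.card_range _)
  · obtain ⟨t, ⟨-, ht⟩, heq⟩ := hy i 0 L
    exact Finset.mem_image.2 ⟨t, Finset.mem_range.2 (by omega), heq⟩

end LinearRecurrence

section Averages

open Finset

variable {f : ℕ → ℝ} {B : ℝ}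

/-- The largest sum of `f` over a block of `n` consecutive indices. It is subadditive in `n`, and
the recurrence of blocks of `f` makes all block sums of length `n` comparable to it. -/
noncomputable def maxBlockSum (f : ℕ → ℝ) (n : ℕ) : ℝ := ⨆ i, ∑ k ∈ Ico i (i + n), f k

lemma abs_sum_Ico_add_le (hf : ∀ k, |f k| ≤ B) (i n : ℕ) :
    |∑ k ∈ Ico i (i + n), f k| ≤ n * B :=
  calc |∑ k ∈ Ico i (i + n), f k| ≤ ∑ k ∈ Ico i (i + n), |f k| := abs_sum_le_sum_abs _ _
    _ ≤ #(Ico i (i + n)) • B := sum_le_card_nsmul _ _ _ fun k _ => hf k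
    _ = n * B := by rw [Nat.card_Ico, Nat.add_sub_cancel_left, nsmul_eq_mul]

lemma sum_Ico_le_maxBlockSum (hf : ∀ k, |f k| ≤ B) (i n : ℕ) :
    ∑ k ∈ Ico i (i + n), f k ≤ maxBlockSum f n :=
  le_ciSup (f := fun i => ∑ k ∈ Ico i (i + n), f k)
    ⟨n * B, Set.forall_mem_range.2 fun i => (abs_le.1 (abs_sum_Ico_add_le hf i n)).2⟩ i

lemma subadditive_maxBlockSum (hf : ∀ k, |f k| ≤ B) : Subadditive (maxBlockSum f) := by
  refine fun a b => ciSup_le fun i => ?_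
  rw [← sum_Ico_consecutive f (Nat.le_add_right i a) (by omega : i + a ≤ i + (a + b)), ← add_assoc]
  exact add_le_add (sum_Ico_le_maxBlockSum hf _ _) (sum_Ico_le_maxBlockSum hf _ _)

lemma bddBelow_range_maxBlockSum_div (hf : ∀ k, |f k| ≤ B) :
    BddBelow (Set.range fun n : ℕ => maxBlockSum f n / n) := by
  refine ⟨-B, Set.forall_mem_range.2 fun n => ?_⟩
  have hB : 0 ≤ B := (abs_nonneg _).trans (hf 0)
  rcases n.eq_zero_or_pos with rfl | hn
  · simpa using hB
  have hsum := (abs_le.1 (abs_sum_Ico_add_le hf 0 n)).1.trans (sum_Ico_le_maxBlockSum hf 0 n)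
  rw [le_div_iff₀ (by positivity)]
  linarith

lemma exists_le_mul_add_of_tendsto_div {u : ℕ → ℝ} {s ε : ℝ} (hε : 0 < ε)
    (hu : Tendsto (fun n : ℕ => u n / n) atTop (𝓝 s)) :
    ∃ C, ∀ n : ℕ, u n ≤ (s + ε) * n + C := by
  have hbdd : IsBoundedUnder (· ≤ ·) atTop fun n : ℕ => u n - (s + ε) * n := by
    refine isBoundedUnder_of_eventually_le (a := 0) ?_
    filter_upwards [hu.eventually_lt_const (lt_add_of_pos_right s hε), eventually_gt_atTop 0]
      with n hlt hn
    rw [div_lt_iff₀ (by positivity)] at hlt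
    linarith
  obtain ⟨C, hC⟩ := hbdd.bddAbove_range
  exact ⟨C, fun n => by linarith [Set.forall_mem_range.1 hC n]⟩

-- Every block of length `R * n + n` contains a copy of the prefix of length `n`; the two remaining
-- pieces have total length `R * n` and are bounded by `hC`.
lemma IsLinearlyRecurrent.maxBlockSum_le {R : ℕ} (hrec : IsLinearlyRecurrent R f)
    (hf : ∀ k, |f k| ≤ B) {b C : ℝ} (hC : ∀ n, maxBlockSum f n ≤ b * n + C) (n : ℕ) :
    maxBlockSum f (R * n + n) ≤ ∑ k ∈ range n, f k + b * (R * n) + 2 * C := by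
  refine ciSup_le fun i => ?_
  obtain ⟨t, ⟨hit, htR⟩, heq⟩ := hrec 0 i n
  obtain ⟨d, rfl⟩ := Nat.exists_eq_add_of_le hit
  obtain ⟨e, he⟩ := Nat.exists_eq_add_of_le (Nat.le_of_add_le_add_left htR)
  have hprefix : ∑ k ∈ Ico (i + d) (i + d + n), f k = ∑ k ∈ range n, f k := by
    rw [sum_Ico_eq_sum_range, Nat.add_sub_cancel_left]
    refine sum_congr rfl fun k hk => ?_
    simpa only [zero_add] using embedSeq_eq_iff.1 heq k (mem_range.1 hk)
  have hleft := (sum_Ico_le_maxBlockSum hf i d).trans (hC d)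
  have hright := (sum_Ico_le_maxBlockSum hf (i + d + n) e).trans (hC e)
  have hsplit : ∑ k ∈ Ico i (i + (R * n + n)), f k = ∑ k ∈ Ico i (i + d), f k +
      ∑ k ∈ Ico (i + d) (i + d + n), f k + ∑ k ∈ Ico (i + d + n) (i + d + n + e), f k := by
    rw [sum_Ico_consecutive f (by omega) (by omega), sum_Ico_consecutive f (by omega) (by omega)]
    congr 2
    omega
  have hde : (R : ℝ) * n = d + e := by exact_mod_cast he
  rw [hsplit, hprefix, hde]
  linarith

lemma IsLinearlyRecurrent.mul_sub_le_sum_range {R : ℕ} (hrec : IsLinearlyRecurrent R f)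
    (hf : ∀ k, |f k| ≤ B) {ε : ℝ} (hε : 0 < ε) :
    ∃ C, ∀ n : ℕ, ((subadditive_maxBlockSum hf).lim - ε * R) * n - C ≤ ∑ k ∈ range n, f k := by
  have hsub := subadditive_maxBlockSum hf
  have hbdd := bddBelow_range_maxBlockSum_div hf
  obtain ⟨C, hC⟩ := exists_le_mul_add_of_tendsto_div hε (hsub.tendsto_lim hbdd)
  refine ⟨2 * C, fun n => ?_⟩
  rcases n.eq_zero_or_pos with rfl | hn
  · have hzero : 0 ≤ C := by simpa [maxBlockSum] using hC 0
    simpa using hzero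
  have hlim := hsub.lim_le_div hbdd (n := R * n + n) (by omega)
  rw [le_div_iff₀ (by positivity)] at hlim
  push_cast at hlim
  linarith [hrec.maxBlockSum_le hf hC n]

lemma IsLinearlyRecurrent.exists_forall_abs_le {R : ℕ} (hrec : IsLinearlyRecurrent R f) :
    ∃ B, ∀ k, |f k| ≤ B := by
  refine ⟨∑ t ∈ range (R + 1), |f t|, fun k => ?_⟩
  obtain ⟨t, ⟨-, ht⟩, heq⟩ := hrec k 0 1
  have hfk : f t = f k := embedSeq_eq_iff.1 heq 0 one_pos
  rw [← hfk]
  exact single_le_sum (f := fun t => |f t|) (fun t _ => abs_nonneg _) (mem_range.2 (by omega))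

lemma IsLinearlyRecurrent.exists_tendsto_average {R : ℕ} (hrec : IsLinearlyRecurrent R f) :
    ∃ s, Tendsto (fun n : ℕ => (∑ k ∈ range n, f k) / n) atTop (𝓝 s) := by
  obtain ⟨B, hf⟩ := hrec.exists_forall_abs_le
  have hsub := subadditive_maxBlockSum hf
  have hlim := hsub.tendsto_lim (bddBelow_range_maxBlockSum_div hf)
  refine ⟨hsub.lim, tendsto_order.2 ⟨fun a ha => ?_, fun a ha => ?_⟩⟩
  · obtain ⟨ε, hε, hεa⟩ : ∃ ε > 0, a < hsub.lim - ε * R := by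
      refine ⟨(hsub.lim - a) / (R + 1), by have := sub_pos.2 ha; positivity, ?_⟩
      have hfrac : (hsub.lim - a) / (R + 1) * R < hsub.lim - a := by
        rw [div_mul_eq_mul_div, div_lt_iff₀ (by positivity)]
        linarith
      linarith
    obtain ⟨C, hC⟩ := hrec.mul_sub_le_sum_range hf hε
    have hlow : Tendsto (fun n : ℕ => hsub.lim - ε * R - C / n) atTop
        (𝓝 (hsub.lim - ε * R - 0)) :=
      tendsto_const_nhds.sub (tendsto_const_div_atTop_nhds_zero_nat C)
    rw [sub_zero] at hlow
    filter_upwards [hlow.eventually_const_lt hεa, eventually_gt_atTop 0] with n hn hpos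
    refine hn.trans_le ?_
    rw [le_div_iff₀ (by positivity), sub_mul, div_mul_cancel₀ _ (by positivity)]
    exact hC n
  · filter_upwards [hlim.eventually_lt_const ha] with n hn
    refine lt_of_le_of_lt ?_ hn
    gcongr
    simpa only [zero_add, range_eq_Ico] using sum_Ico_le_maxBlockSum hf 0 n

end Averages

section Density

variable {M N : Set (ℕ × ℕ)} {a b : ℝ}

/-- The number of points of `M` in `[0, n)²`; this is the numerator of `densCount`. -/
noncomputable def squareCount (M : Set (ℕ × ℕ)) (n : ℕ) : ℕ :=
  (M ∩ {p | p.1 < n ∧ p.2 < n}).ncard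

lemma finite_inter_square (M : Set (ℕ × ℕ)) (n : ℕ) :
    (M ∩ {p | p.1 < n ∧ p.2 < n}).Finite :=
  ((Set.finite_Iio n).prod (Set.finite_Iio n)).subset fun _ hp => hp.2

lemma HasDens.tendsto_squareCount_comp_div (hM : HasDens M a) {φ : ℕ → ℕ} {g : ℕ → ℝ}
    (hφ : Tendsto φ atTop atTop) (hg : Tendsto (fun n => (φ n : ℝ) ^ 2 / g n) atTop (𝓝 1)) :
    Tendsto (fun n => (squareCount M (φ n) : ℝ) / g n) atTop (𝓝 a) := by
  have hprod := (Tendsto.comp hM hφ).mul hg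
  rw [mul_one] at hprod
  refine hprod.congr' ?_
  filter_upwards [hφ.eventually_gt_atTop 0] with n hn
  exact div_mul_div_cancel₀ (by positivity)

lemma HasDens.le_of_add_one_mem (hM : HasDens M a) (hN : HasDens N b)
    (hMN : ∀ p ∈ M, p + 1 ∈ N) : a ≤ b := by
  have hratio : Tendsto (fun n : ℕ => ((n + 1 : ℕ) : ℝ) ^ 2 / (n : ℝ) ^ 2) atTop (𝓝 1) := by
    have hone := ((tendsto_const_nhds (x := (1 : ℝ))).add
      tendsto_one_div_atTop_nhds_zero_nat).pow 2
    rw [add_zero, one_pow] at hone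
    refine hone.congr' ?_
    filter_upwards [eventually_gt_atTop 0] with n hn
    push_cast
    field_simp
  refine le_of_tendsto_of_tendsto' hM
    (hN.tendsto_squareCount_comp_div (tendsto_add_atTop_nat 1) hratio) fun n => ?_
  have hcount : squareCount M n ≤ squareCount N (n + 1) :=
    Set.ncard_le_ncard_of_injOn (· + 1)
      (fun p hp => ⟨hMN p hp.1, Nat.succ_lt_succ hp.2.1, Nat.succ_lt_succ hp.2.2⟩)
      (add_left_injective 1).injOn (finite_inter_square N (n + 1))
  exact div_le_div_of_nonneg_right (Nat.cast_le.2 hcount) (by positivity)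

lemma HasDens.diff (hM : HasDens M a) (hN : HasDens N b) (hNM : N ⊆ M) :
    HasDens (M \ N) (a - b) := by
  refine (Tendsto.sub hM hN).congr fun n => ?_
  have hcount := Set.ncard_sdiff_add_ncard_of_subset
    (Set.inter_subset_inter_left {p | p.1 < n ∧ p.2 < n} hNM) (finite_inter_square M n)
  rw [← Set.inter_sdiff_distrib_right] at hcount
  simp only [densCount, ← hcount, Nat.cast_add]
  ring

lemma hasDens_diagonal : HasDens (Set.diagonal ℕ) 0 := by
  refine tendsto_one_div_atTop_nhds_zero_nat.congr fun n => ?_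
  have himage : Set.diagonal ℕ ∩ {p | p.1 < n ∧ p.2 < n} = (fun i => (i, i)) '' Set.Iio n := by
    ext ⟨i, j⟩
    simp only [Set.mem_inter_iff, Set.mem_diagonal_iff, Set.mem_ofPred_eq, Set.mem_image,
      Set.mem_Iio, Prod.mk.injEq]
    exact ⟨fun ⟨hij, hi, _⟩ => ⟨i, hi, rfl, hij⟩, fun ⟨k, hk, hki, hkj⟩ =>
      ⟨hki.symm.trans hkj, hki ▸ hk, hkj ▸ hk⟩⟩
  rw [densCount, himage, Set.ncard_image_of_injective _ fun i j h => congrArg Prod.fst h,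
    Set.ncard_eq_toFinset_card', Set.toFinset_Iio, Nat.card_Iio]
  rcases n.eq_zero_or_pos with rfl | hn
  · simp
  · field_simp

end Density

section Matches

open Finset

variable {α β : Type*} {y : ℕ → α} {z : ℕ → β} {T : Finset β}

/-- The pairs of positions at which `z` takes the same value. For `z = embedSeq L y` these are the
recurrences of words of length `L` in `y`. -/
def matchSet (z : ℕ → β) : Set (ℕ × ℕ) := {p | z p.1 = z p.2}

lemma squareCount_matchSet [DecidableEq β] (hT : ∀ i, z i ∈ T) (n : ℕ) :
    squareCount (matchSet z) n = ∑ b ∈ T, Nat.count (z · = b) n ^ 2 := by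
  have hcoe : matchSet z ∩ {p | p.1 < n ∧ p.2 < n} =
      ({p ∈ range n ×ˢ range n | z p.1 = z p.2} : Finset (ℕ × ℕ)) := by
    ext p
    simp [matchSet, and_comm]
  rw [squareCount, hcoe, Set.ncard_coe_finset,
    card_eq_sum_card_fiberwise (f := fun p => z p.1) (t := T) fun p _ => hT p.1]
  refine sum_congr rfl fun b _ => ?_
  rw [sq, Nat.count_eq_card_filter_range, ← card_product]
  congr 1
  ext p
  simp only [mem_filter, mem_product]
  grind

lemma sum_count_eq [DecidableEq β] (hT : ∀ i, z i ∈ T) (n : ℕ) :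
    ∑ b ∈ T, Nat.count (z · = b) n = n := by
  simp only [Nat.count_eq_card_filter_range]
  rw [← card_eq_sum_card_fiberwise (f := z) fun i _ => hT i, card_range]

lemma IsLinearlyRecurrent.exists_tendsto_count_div [DecidableEq β] {R : ℕ}
    (hz : IsLinearlyRecurrent R z) (b : β) :
    ∃ s : ℝ, Tendsto (fun n : ℕ => (Nat.count (z · = b) n : ℝ) / n) atTop (𝓝 s) := by
  obtain ⟨s, hs⟩ := (hz.comp fun b' => if b' = b then (1 : ℝ) else 0).exists_tendsto_average
  refine ⟨s, hs.congr fun n => ?_⟩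
  rw [Nat.count_eq_card_filter_range, card_filter]
  push_cast
  rfl

lemma IsLinearlyRecurrent.exists_hasDens_matchSet {R : ℕ} (hz : IsLinearlyRecurrent R z)
    (hT : ∀ i, z i ∈ T) : ∃ a, HasDens (matchSet z) a := by
  classical
  choose s hs using hz.exists_tendsto_count_div
  refine ⟨∑ b ∈ T, s b ^ 2, (tendsto_finsetSum T fun b _ => (hs b).pow 2).congr fun n => ?_⟩
  change _ = (squareCount (matchSet z) n : ℝ) / (n : ℝ) ^ 2
  rw [squareCount_matchSet hT, Nat.cast_sum, sum_div]
  exact sum_congr rfl fun b _ => by rw [div_pow, Nat.cast_pow]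

-- Cauchy–Schwarz: `n² = (∑ b, count b)² ≤ #T * ∑ b, (count b)²`.
lemma one_le_card_mul_of_hasDens_matchSet {a : ℝ} (ha : HasDens (matchSet z) a)
    (hT : ∀ i, z i ∈ T) : 1 ≤ #T * a := by
  classical
  refine ge_of_tendsto (Tendsto.const_mul (#T : ℝ) ha) ?_
  filter_upwards [eventually_gt_atTop 0] with n hn
  have hcs : n ^ 2 ≤ #T * squareCount (matchSet z) n := by
    simpa only [sum_count_eq hT, ← squareCount_matchSet hT, Nat.cast_id] using
      sq_sum_le_card_mul_sum_sq (s := T) (f := fun b => Nat.count (z · = b) n)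
  change 1 ≤ (#T : ℝ) * ((squareCount (matchSet z) n : ℝ) / (n : ℝ) ^ 2)
  rw [← mul_div_assoc, one_le_div (by positivity)]
  exact_mod_cast hcs

lemma IsLinearlyRecurrent.exists_hasDens_matchSet_embedSeq {C : ℕ}
    (hy : IsLinearlyRecurrent C y) (L : ℕ) :
    ∃ a, HasDens (matchSet (embedSeq L y)) a ∧ 1 ≤ ((C : ℝ) * L + 1) * a := by
  obtain ⟨T, hcard, hT⟩ := hy.exists_finset_embedSeq_mem L
  obtain ⟨a, ha⟩ := (hy.isLinearlyRecurrent_embedSeq L).exists_hasDens_matchSet hT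
  have hlow := one_le_card_mul_of_hasDens_matchSet ha hT
  have ha0 : 0 ≤ a := ge_of_tendsto' ha fun n => by unfold densCount; positivity
  refine ⟨a, ha, hlow.trans (mul_le_mul_of_nonneg_right ?_ ha0)⟩
  exact_mod_cast hcard

lemma matchSet_embedSeq_succ_subset (y : ℕ → α) (L : ℕ) :
    matchSet (embedSeq (L + 1) y) ⊆ matchSet (embedSeq L y) := fun _ hp =>
  embedSeq_eq_iff.2 fun t ht => embedSeq_eq_iff.1 hp t (by omega)

lemma add_one_mem_matchSet_embedSeq {L : ℕ} {p : ℕ × ℕ}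
    (hp : p ∈ matchSet (embedSeq (L + 1) y)) : p + 1 ∈ matchSet (embedSeq L y) :=
  embedSeq_eq_iff.2 fun t ht => by
    simpa only [Prod.fst_add, Prod.snd_add, Prod.fst_one, Prod.snd_one, add_assoc, add_comm 1 t]
      using embedSeq_eq_iff.1 hp (t + 1) (by omega)

lemma mem_matchSet_embedSeq_succ_of_add_one_mem {L : ℕ} {p : ℕ × ℕ}
    (hp : p ∈ matchSet (embedSeq 1 y)) (hp' : p + 1 ∈ matchSet (embedSeq L y)) :
    p ∈ matchSet (embedSeq (L + 1) y) := by
  refine embedSeq_eq_iff.2 fun t ht => ?_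
  rcases t with _ | t
  · exact embedSeq_eq_iff.1 hp 0 one_pos
  · simpa only [Prod.fst_add, Prod.snd_add, Prod.fst_one, Prod.snd_one, add_assoc, add_comm 1 t]
      using embedSeq_eq_iff.1 hp' t (by omega)

variable {c : ℕ → ℝ}

lemma antitone_of_hasDens_matchSet (hc : ∀ L, HasDens (matchSet (embedSeq L y)) (c L)) :
    Antitone c :=
  antitone_nat_of_succ_le fun L =>
    (hc (L + 1)).le_of_add_one_mem (hc L) fun _ hp => add_one_mem_matchSet_embedSeq hp

-- A match of length exactly `L + 1` becomes one of length exactly `L` when its first letters are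
-- dropped.
lemma antitone_sub_succ_of_hasDens_matchSet
    (hc : ∀ L, HasDens (matchSet (embedSeq L y)) (c L)) :
    Antitone fun L => c L - c (L + 1) := by
  have hdens (L : ℕ) := (hc L).diff (hc (L + 1)) (matchSet_embedSeq_succ_subset y L)
  refine antitone_nat_of_succ_le fun L => (hdens (L + 1)).le_of_add_one_mem (hdens L) ?_
  rintro p ⟨hp, hp'⟩
  have hone : p ∈ matchSet (embedSeq 1 y) :=
    embedSeq_eq_iff.2 fun t ht => embedSeq_eq_iff.1 hp t (by omega)
  exact ⟨add_one_mem_matchSet_embedSeq hp,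
    fun hmem => hp' (mem_matchSet_embedSeq_succ_of_add_one_mem hone hmem)⟩

end Matches

section ConvexSequences

variable {c : ℕ → ℝ}

lemma mul_sub_succ_le_of_antitone_sub_succ (hconv : Antitone fun L => c L - c (L + 1)) (a b : ℕ) :
    (b : ℝ) * (c (a + b) - c (a + b + 1)) ≤ c a - c (a + b) :=
  calc (b : ℝ) * (c (a + b) - c (a + b + 1))
      = (Finset.range b).card • (c (a + b) - c (a + b + 1)) := by
        rw [Finset.card_range, nsmul_eq_mul]
    _ ≤ ∑ k ∈ Finset.range b, (c (a + k) - c (a + (k + 1))) :=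
        Finset.card_nsmul_le_sum _ _ _ fun k hk =>
          hconv (by have := Finset.mem_range.1 hk; omega : a + k ≤ a + b)
    _ = c a - c (a + b) := Finset.sum_range_sub' (fun k => c (a + k)) b

lemma tendsto_mul_sub_succ_of_antitone_sub_succ {s : ℝ} (hanti : Antitone c)
    (hconv : Antitone fun L => c L - c (L + 1)) (hs : Tendsto c atTop (𝓝 s)) :
    Tendsto (fun L : ℕ => (L : ℝ) * (c L - c (L + 1))) atTop (𝓝 0) := by
  have hhalf : Tendsto (fun L : ℕ => 2 * (c (L / 2) - c L)) atTop (𝓝 (2 * (s - s))) :=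
    ((hs.comp (Nat.tendsto_div_const_atTop two_ne_zero)).sub hs).const_mul 2
  rw [sub_self, mul_zero] at hhalf
  have hnonneg (L : ℕ) : 0 ≤ c L - c (L + 1) := sub_nonneg.2 (hanti L.le_succ)
  refine squeeze_zero (fun L => mul_nonneg L.cast_nonneg (hnonneg L)) (fun L => ?_) hhalf
  have hsum := mul_sub_succ_le_of_antitone_sub_succ hconv (L / 2) (L - L / 2)
  rw [Nat.add_sub_cancel' (Nat.div_le_self L 2)] at hsum
  have hcast : (L : ℝ) ≤ 2 * (L - L / 2 : ℕ) := by exact_mod_cast (by omega : L ≤ 2 * (L - L / 2))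
  linarith [mul_le_mul_of_nonneg_right hcast (hnonneg L)]

-- `1 - c (L + 1) / c L ≤ (C * L + 1) * (c L - c (L + 1))`, and the right-hand side tends to `0`.
lemma tendsto_succ_div_of_antitone_sub_succ {C : ℝ} (hpos : ∀ L, 0 < c L) (hanti : Antitone c)
    (hconv : Antitone fun L => c L - c (L + 1)) (hlow : ∀ L : ℕ, 1 ≤ (C * L + 1) * c L) :
    Tendsto (fun L => c (L + 1) / c L) atTop (𝓝 1) := by
  have hlim := tendsto_atTop_ciInf hanti
    ⟨0, Set.forall_mem_range.2 fun L => (hpos L).le⟩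
  have herror : Tendsto (fun L : ℕ => 1 - (C * (L * (c L - c (L + 1))) + (c L - c (L + 1)))) atTop
      (𝓝 (1 - (C * 0 + ((⨅ L, c L) - ⨅ L, c L)))) :=
    tendsto_const_nhds.sub (((tendsto_mul_sub_succ_of_antitone_sub_succ hanti hconv
      hlim).const_mul C).add (hlim.sub (hlim.comp (tendsto_add_atTop_nat 1))))
  rw [mul_zero, sub_self, add_zero, sub_zero] at herror
  refine tendsto_of_tendsto_of_tendsto_of_le_of_le herror tendsto_const_nhds (fun L => ?_)
    fun L => (div_le_one (hpos L)).2 (hanti L.le_succ)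
  rw [le_div_iff₀ (hpos L)]
  have hdiff : 0 ≤ c L - c (L + 1) := sub_nonneg.2 (hanti L.le_succ)
  linarith [mul_le_mul_of_nonneg_right (hlow L) hdiff]

lemma tendsto_ratio_of_tendsto_succ_div (hpos : ∀ L, 0 < c L)
    (hc : Tendsto (fun L => c (L + 1) / c L) atTop (𝓝 1)) (b : ℝ) :
    Tendsto (fun L => ((b + 1) * c (L + 1) - b * c (L + 2)) / (b * c L - (b - 1) * c (L + 1)))
      atTop (𝓝 1) := by
  have hc' := hc.comp (tendsto_add_atTop_nat 1)
  have hquot := ((hc.const_mul (b + 1)).sub ((hc.mul hc').const_mul b)).div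
    ((tendsto_const_nhds (x := b)).sub (hc.const_mul (b - 1))) (by ring_nf; norm_num)
  rw [show ((b + 1) * 1 - b * (1 * 1)) / (b - (b - 1) * 1) = 1 by ring_nf] at hquot
  refine hquot.congr fun L => ?_
  have h₀ := (hpos L).ne'
  have h₁ := (hpos (L + 1)).ne'
  rw [← div_div_div_cancel_right₀ h₀ ((b + 1) * c (L + 1) - b * c (L + 2))]
  simp only [Pi.div_apply, Function.comp_apply, add_assoc, Nat.reduceAdd]
  congr 1 <;> field_simp

end ConvexSequences

section Lines

variable {X : Type*} (d : X → X → ℝ) (f : X → X) (x : X) (n : ℕ) (ε : ℝ)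

/-- The starting points of the off-diagonal runs of `k` recurrences along a diagonal of
`RP(x, n, ε)`. Unlike the lines of `IsLine`, such a run may extend further in both directions. -/
def segments (k : ℕ) : Set (ℕ × ℕ) :=
  {p | p.1 ≠ p.2 ∧ p.1 + k ≤ n ∧ p.2 + k ≤ n ∧ ∀ h < k, RPone d f x ε (p.1 + h) (p.2 + h)}

/-- The segments of length `k` that cannot be extended to the left; extending them to the right
as far as possible gives the lines of length at least `k`. -/
def leftMaximalSegments (k : ℕ) : Set (ℕ × ℕ) :=
  {p ∈ segments d f x n ε k | 0 < p.1 → 0 < p.2 → ¬ RPone d f x ε (p.1 - 1) (p.2 - 1)}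

lemma finite_segments (k : ℕ) : (segments d f x n ε k).Finite :=
  (Set.finite_Iic (n, n)).subset fun _ ⟨_, h₁, h₂, _⟩ =>
    ⟨le_of_add_le_left h₁, le_of_add_le_left h₂⟩

lemma segments_eq_empty {k : ℕ} (hk : n < k) : segments d f x n ε k = ∅ :=
  Set.eq_empty_of_forall_notMem fun _ ⟨_, h₁, _⟩ => hk.not_ge (le_of_add_le_right h₁)

variable {d f x n ε} in
lemma add_one_mem_segments {k : ℕ} {p : ℕ × ℕ} (hp : p ∈ segments d f x n ε (k + 1)) :
    p + 1 ∈ segments d f x n ε k := by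
  obtain ⟨hne, h₁, h₂, hrec⟩ := hp
  refine ⟨fun h => hne (Nat.succ_injective h), ?_, ?_, fun t ht => ?_⟩
  · simpa only [Prod.fst_add, Prod.fst_one, add_assoc, add_comm 1 k] using h₁
  · simpa only [Prod.snd_add, Prod.snd_one, add_assoc, add_comm 1 k] using h₂
  · simpa only [Prod.fst_add, Prod.fst_one, Prod.snd_add, Prod.snd_one, add_assoc, add_comm 1 t]
      using hrec (t + 1) (by omega)

lemma segments_diff_image_add_one (k : ℕ) :
    segments d f x n ε k \ (· + 1) '' segments d f x n ε (k + 1) =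
      leftMaximalSegments d f x n ε k := by
  ext ⟨i, j⟩
  refine and_congr_right fun ⟨hne, h₁, h₂, hrec⟩ => ⟨fun hnot hi hj hR => hnot ?_, ?_⟩
  · obtain ⟨i, rfl⟩ := Nat.exists_eq_add_one.2 hi
    obtain ⟨j, rfl⟩ := Nat.exists_eq_add_one.2 hj
    refine ⟨(i, j), ⟨?_, ?_, ?_, ?_⟩, rfl⟩
    · exact fun h => hne (congrArg (· + 1) h)
    · simpa only [add_assoc, add_comm 1 k] using h₁
    · simpa only [add_assoc, add_comm 1 k] using h₂
    · rintro (_ | t) ht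
      · exact hR
      · simpa only [add_assoc, add_comm 1 t] using hrec t (by omega)
  · rintro hmax ⟨⟨i, j⟩, ⟨-, -, -, hrec'⟩, heq⟩
    obtain ⟨rfl, rfl⟩ := Prod.mk.injEq .. ▸ heq
    exact hmax (Nat.succ_pos _) (Nat.succ_pos _) (hrec' 0 k.succ_pos)

lemma ncard_segments (k : ℕ) :
    (segments d f x n ε k).ncard =
      (leftMaximalSegments d f x n ε k).ncard + (segments d f x n ε (k + 1)).ncard := by
  rw [← segments_diff_image_add_one,
    ← Set.ncard_image_of_injective (segments d f x n ε (k + 1)) (add_left_injective 1)]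
  exact (Set.ncard_sdiff_add_ncard_of_subset
    (Set.image_subset_iff.2 fun _ => add_one_mem_segments) (finite_segments d f x n ε k)).symm

lemma leftMaximalSegments_succ_subset (k : ℕ) :
    leftMaximalSegments d f x n ε (k + 1) ⊆ leftMaximalSegments d f x n ε k :=
  fun _ ⟨⟨hne, h₁, h₂, hrec⟩, hmax⟩ =>
    ⟨⟨hne, by omega, by omega, fun t ht => hrec t (by omega)⟩, hmax⟩

lemma setOf_isLine_eq_diff {l : ℕ} (hl : 1 ≤ l) :
    {p : ℕ × ℕ | IsLine d f x n ε p.1 p.2 l} =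
      leftMaximalSegments d f x n ε l \ leftMaximalSegments d f x n ε (l + 1) := by
  ext p
  constructor
  · rintro ⟨-, h₁, h₂, hne, hrec, hmax, hend⟩
    exact ⟨⟨⟨hne, h₁, h₂, hrec⟩, hmax⟩,
      fun ⟨⟨_, h₁', h₂', hrec'⟩, _⟩ => hend (by omega) (hrec' l l.lt_succ_self)⟩
  · rintro ⟨⟨⟨hne, h₁, h₂, hrec⟩, hmax⟩, hnot⟩
    refine ⟨hl, h₁, h₂, hne, hrec, hmax, fun hlt hR => hnot ⟨⟨hne, by omega, by omega, ?_⟩, hmax⟩⟩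
    exact fun t ht => (Nat.lt_succ_iff_lt_or_eq.1 ht).elim (hrec t) fun h => h ▸ hR

lemma Nlines_eq {l : ℕ} (hl : 1 ≤ l) :
    (Nlines d f x n ε l : ℝ) = (segments d f x n ε l).ncard -
      2 * (segments d f x n ε (l + 1)).ncard + (segments d f x n ε (l + 2)).ncard := by
  have hlines : Nlines d f x n ε l + (leftMaximalSegments d f x n ε (l + 1)).ncard =
      (leftMaximalSegments d f x n ε l).ncard := by
    rw [Nlines, setOf_isLine_eq_diff d f x n ε hl]
    exact Set.ncard_sdiff_add_ncard_of_subset (leftMaximalSegments_succ_subset d f x n ε l)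
      ((finite_segments d f x n ε l).subset fun _ hp => hp.1)
  have hl₀ := ncard_segments d f x n ε l
  have hl₁ := ncard_segments d f x n ε (l + 1)
  rify at hlines hl₀ hl₁
  linarith

lemma RRate_eq {ℓ : ℕ} (hℓ : 1 ≤ ℓ) :
    RRate d f x n ε ℓ = (ℓ * (segments d f x n ε ℓ).ncard -
      (ℓ - 1) * (segments d f x n ε (ℓ + 1)).ncard) / ((n : ℝ) ^ 2 - n) := by
  set F : ℕ → ℝ := fun l =>
    l * (segments d f x n ε l).ncard - (l - 1) * (segments d f x n ε (l + 1)).ncard with hF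
  have hdiff (k : ℕ) : ((ℓ + k : ℕ) : ℝ) * Pline d f x n ε (ℓ + k) =
      (F (ℓ + k) - F (ℓ + (k + 1))) / ((n : ℝ) ^ 2 - n) := by
    rw [Pline, Nlines_eq d f x n ε (by omega)]
    simp only [hF, ← add_assoc]
    push_cast
    ring
  have hzero {l : ℕ} (hl : n < l) : F l = 0 := by
    simp only [hF, segments_eq_empty d f x n ε hl,
      segments_eq_empty d f x n ε (hl.trans l.lt_succ_self), Set.ncard_empty, Nat.cast_zero,
      mul_zero, sub_zero]
  simp only [RRate, hdiff]
  rw [tsum_eq_sum (s := Finset.range (n + 1)), ← Finset.sum_div,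
    Finset.sum_range_sub' (fun k => F (ℓ + k)), hzero (by omega : n < ℓ + (n + 1)), sub_zero,
    add_zero]
  intro k hk
  have hnk : n + 1 ≤ k := not_lt.1 fun h => hk (Finset.mem_range.2 h)
  rw [hzero (by omega), hzero (by omega), sub_zero, zero_div]

end Lines

section RecurrenceRate

variable {α : Type*} {y : ℕ → α} {m h : ℕ}

lemma segments_embedSeq {k : ℕ} (n : ℕ) (hm : 1 ≤ m) (hh : 1 ≤ h) (hk : 1 ≤ k) :
    segments seqDist shift (embedSeq m y) n ((2 : ℝ) ^ (-(h : ℤ))) k =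
      (matchSet (embedSeq (h + (m + k - 2)) y) \ Set.diagonal ℕ) ∩
        {p | p.1 < n + 1 - k ∧ p.2 < n + 1 - k} := by
  ext ⟨i, j⟩
  have hlen : h + (m + k - 2) = k + (h + m - 1) - 1 := by omega
  have hmatch : (∀ t < k, RPone seqDist shift (embedSeq m y) ((2 : ℝ) ^ (-(h : ℤ))) (i + t) (j + t))
      ↔ embedSeq (h + (m + k - 2)) y i = embedSeq (h + (m + k - 2)) y j := by
    rw [hlen, ← embedSeq_embedSeq_eq_iff hk (by omega), embedSeq_eq_iff]
    simp only [RPone_embedSeq_iff hm hh]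
  have hi : i + k ≤ n ↔ i < n + 1 - k := by omega
  have hj : j + k ≤ n ↔ j < n + 1 - k := by omega
  simp only [segments, matchSet, Set.mem_ofPred_eq, Set.mem_inter_iff, Set.mem_sdiff,
    Set.mem_diagonal_iff, hmatch, hi, hj]
  tauto

lemma tendsto_sq_add_one_sub_div (k : ℕ) :
    Tendsto (fun n : ℕ => ((n + 1 - k : ℕ) : ℝ) ^ 2 / ((n : ℝ) ^ 2 - n)) atTop (𝓝 1) := by
  have hinv := tendsto_one_div_atTop_nhds_zero_nat (𝕜 := ℝ)
  have hlim := (((hinv.const_mul (1 - k : ℝ)).const_add 1).pow 2).div (hinv.const_sub 1)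
    (by norm_num)
  rw [mul_zero, add_zero, one_pow, sub_zero, div_one] at hlim
  refine hlim.congr' ?_
  filter_upwards [eventually_ge_atTop (k + 1)] with n hn
  have hn0 : (n : ℝ) ≠ 0 := Nat.cast_ne_zero.2 (by omega)
  rw [Pi.div_apply, ← mul_div_mul_right _ _ (pow_ne_zero 2 hn0), Nat.cast_sub (by omega)]
  congr 1
  · push_cast
    field_simp
    ring
  · field_simp

lemma tendsto_ncard_segments_div {k : ℕ} {a : ℝ} (hm : 1 ≤ m) (hh : 1 ≤ h) (hk : 1 ≤ k)
    (ha : HasDens (matchSet (embedSeq (h + (m + k - 2)) y)) a) :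
    Tendsto (fun n : ℕ => ((segments seqDist shift (embedSeq m y) n
      ((2 : ℝ) ^ (-(h : ℤ))) k).ncard : ℝ) / ((n : ℝ) ^ 2 - n)) atTop (𝓝 a) := by
  have hoff := ha.diff hasDens_diagonal fun p (hp : p.1 = p.2) => congrArg _ hp
  rw [sub_zero] at hoff
  simp only [segments_embedSeq _ hm hh hk]
  exact hoff.tendsto_squareCount_comp_div
    (tendsto_atTop_mono (fun n => by omega) (tendsto_sub_atTop_nat k))
    (tendsto_sq_add_one_sub_div k)

lemma tendsto_RRate {ℓ : ℕ} {c : ℕ → ℝ} (hm : 1 ≤ m) (hh : 1 ≤ h) (hℓ : 1 ≤ ℓ)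
    (hc : ∀ L, HasDens (matchSet (embedSeq L y)) (c L)) :
    Tendsto (fun n => RRate seqDist shift (embedSeq m y) n ((2 : ℝ) ^ (-(h : ℤ))) ℓ) atTop
      (𝓝 (ℓ * c (h + (m + ℓ - 2)) - (ℓ - 1) * c (h + (m + ℓ - 2) + 1))) := by
  have hsucc : h + (m + ℓ - 2) + 1 = h + (m + (ℓ + 1) - 2) := by omega
  rw [hsucc]
  have hlim := ((tendsto_ncard_segments_div hm hh hℓ (hc _)).const_mul (ℓ : ℝ)).sub
    ((tendsto_ncard_segments_div hm hh (k := ℓ + 1) (by omega) (hc _)).const_mul (ℓ - 1 : ℝ))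
  refine hlim.congr fun n => ?_
  rw [RRate_eq _ _ _ _ _ hℓ, sub_div, mul_div_assoc, mul_div_assoc]

end RecurrenceRate

section ConstantLengthBlocks

variable {α β : Type*} {g : α → List β} {Q : ℕ} {v : List α} {w : List β}

lemma exists_infix_length_le_two_of_infix_flatMap (hg : ∀ a, (g a).length = Q)
    (hw : w <:+: v.flatMap g) (hlen : w.length ≤ Q) :
    ∃ u, u <:+: v ∧ u.length ≤ 2 ∧ w <:+: u.flatMap g := by
  induction v with
  | nil => exact ⟨[], List.nil_infix, by simp, hw⟩
  | cons a v ih =>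
    rw [List.flatMap_cons, List.infix_append_iff] at hw
    obtain hleft | hright | ⟨w₁, w₂, rfl, hw₁, hw₂⟩ := hw
    · exact ⟨[a], (List.prefix_append [a] v).isInfix, by simp, by simpa using hleft⟩
    · obtain ⟨u, huv, hu, hwu⟩ := ih hright
      exact ⟨u, huv.trans (List.suffix_cons a v).isInfix, hu, hwu⟩
    · rcases v with _ | ⟨b, v⟩
      · refine ⟨[a], List.infix_rfl, by simp, ?_⟩
        rw [List.prefix_nil.1 hw₂]
        simpa using hw₁.isInfix
      · have hw₂b : w₂ <+: g b := by
          refine List.prefix_of_prefix_length_le hw₂ (List.prefix_append _ _) ?_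
          rw [List.length_append] at hlen
          rw [hg b]
          omega
        refine ⟨[a, b], (List.prefix_append [a, b] v).isInfix, le_rfl, ?_⟩
        simpa using List.infix_append_iff.2 (.inr (.inr ⟨w₁, w₂, rfl, hw₁, hw₂b⟩))

lemma exists_infix_of_infix_flatMap (hQ : 0 < Q) (hg : ∀ a, (g a).length = Q)
    (hw : w <:+: v.flatMap g) (hlen : 2 * Q ≤ w.length) : ∃ a ∈ v, g a <:+: w := by
  induction v with
  | nil =>
    have hnil := hw.length_le
    simp only [List.flatMap_nil, List.length_nil] at hnil
    omega
  | cons a v ih =>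
    rw [List.flatMap_cons, List.infix_append_iff] at hw
    obtain hleft | hright | ⟨w₁, w₂, rfl, hw₁, hw₂⟩ := hw
    · have hle := hleft.length_le
      rw [hg a] at hle
      omega
    · obtain ⟨b, hb, hbw⟩ := ih hright
      exact ⟨b, List.mem_cons_of_mem a hb, hbw⟩
    · have hle₁ := hw₁.length_le
      rw [hg a] at hle₁
      rw [List.length_append] at hlen
      rcases v with _ | ⟨b, v⟩
      · have hle₂ := hw₂.length_le
        simp only [List.flatMap_nil, List.length_nil] at hle₂
        omega
      · have hb : g b <+: w₂ :=
          List.prefix_of_prefix_length_le (List.prefix_append _ _) hw₂ (by rw [hg b]; omega)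
        exact ⟨b, by simp, hb.isInfix.trans (List.suffix_append w₁ w₂).isInfix⟩

end ConstantLengthBlocks

section Substitution

variable {ζ : Bool → List Bool} {q : ℕ} {w : List Bool}

lemma substWord_eq_flatMap (ζ : Bool → List Bool) (v : List Bool) :
    substWord ζ v = v.flatMap ζ := by
  induction v with
  | nil => rfl
  | cons a v ih => rw [List.flatMap_cons, ← ih, substWord, List.foldr_cons, substWord]

lemma iterate_substWord_eq_flatMap (ζ : Bool → List Bool) (k : ℕ) (v : List Bool) :
    (substWord ζ)^[k] v = v.flatMap fun a => (substWord ζ)^[k] [a] := by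
  induction k with
  | zero => simp
  | succ k ih =>
    simp only [Function.iterate_succ_apply', substWord_eq_flatMap ζ]
    rw [ih, List.flatMap_assoc]

lemma IsConstLenSubst.length_iterate (hζ : IsConstLenSubst ζ q) (k : ℕ) (v : List Bool) :
    ((substWord ζ)^[k] v).length = q ^ k * v.length := by
  induction k with
  | zero => simp
  | succ k ih =>
    rw [Function.iterate_succ_apply', substWord_eq_flatMap, List.length_flatMap]
    simp only [hζ.2, List.map_const', List.sum_replicate, smul_eq_mul, ih]
    ring

lemma iterate_substWord_infix {u v : List Bool} (huv : u <:+: v) (k : ℕ) :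
    (substWord ζ)^[k] u <:+: (substWord ζ)^[k] v := by
  rw [iterate_substWord_eq_flatMap ζ k u, iterate_substWord_eq_flatMap ζ k v]
  exact huv.flatMap _

lemma mem_substLang_of_infix {u v : List Bool} (hv : v ∈ substLang ζ) (huv : u <:+: v) :
    u ∈ substLang ζ := by
  obtain ⟨a, k, hk, hva⟩ := hv
  exact ⟨a, k, hk, huv.trans hva⟩

lemma IsPrimitive.eventually_mem_iterate (hprim : IsPrimitive ζ) (hζ : IsConstLenSubst ζ q) :
    ∀ᶠ k in atTop, ∀ a b, b ∈ (substWord ζ)^[k] [a] := by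
  obtain ⟨K, -, hK⟩ := hprim
  filter_upwards [eventually_ge_atTop K] with k hk a b
  obtain ⟨d, rfl⟩ := Nat.exists_eq_add_of_le hk
  have hq : 0 < q := two_pos.trans_le hζ.1
  have hlen : 0 < ((substWord ζ)^[d] [a]).length := by
    rw [hζ.length_iterate, List.length_singleton]
    positivity
  obtain ⟨a', ha'⟩ := List.exists_mem_of_length_pos hlen
  rw [Function.iterate_add_apply, iterate_substWord_eq_flatMap]
  exact List.mem_flatMap.2 ⟨a', ha', hK a' b⟩

lemma IsPrimitive.eventually_infix_iterate (hprim : IsPrimitive ζ) (hζ : IsConstLenSubst ζ q)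
    (hw : w ∈ substLang ζ) : ∀ᶠ k in atTop, ∀ a, w <:+: (substWord ζ)^[k] [a] := by
  obtain ⟨b, j, -, hwb⟩ := hw
  filter_upwards [eventually_ge_atTop j,
    (tendsto_sub_atTop_nat j).eventually (hprim.eventually_mem_iterate hζ)] with k hk hmem a
  rw [← Nat.add_sub_cancel' hk, Function.iterate_add_apply]
  exact hwb.trans (iterate_substWord_infix ((List.singleton_infix_iff _ _).2 (hmem a b)) j)

lemma IsPrimitive.exists_forall_infix_iterate (hprim : IsPrimitive ζ) (hζ : IsConstLenSubst ζ q)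
    (N : ℕ) :
    ∃ K, ∀ w ∈ substLang ζ, w.length ≤ N → ∀ a, w <:+: (substWord ζ)^[K] [a] := by
  have hfin : {w ∈ substLang ζ | w.length ≤ N}.Finite :=
    (List.finite_length_le Bool N).subset fun _ hw => hw.2
  obtain ⟨K, hK⟩ := ((eventually_all_finite hfin).2 fun w hw =>
    hprim.eventually_infix_iterate hζ hw.1).exists
  exact ⟨K, fun w hw hlen => hK w ⟨hw, hlen⟩⟩

lemma IsPrimitive.exists_mem_infix_iterate (hprim : IsPrimitive ζ) (hζ : IsConstLenSubst ζ q)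
    (hw : w ∈ substLang ζ) (k : ℕ) : ∃ v ∈ substLang ζ, w <:+: (substWord ζ)^[k] v := by
  obtain ⟨j, hj, hjk⟩ := ((hprim.eventually_infix_iterate hζ hw).and
    (eventually_gt_atTop k)).exists
  refine ⟨(substWord ζ)^[j - k] [true], ⟨true, j - k, by omega, List.infix_rfl⟩, ?_⟩
  rw [← Function.iterate_add_apply, Nat.add_sub_cancel' hjk.le]
  exact hj true

-- With `q ^ k` slightly larger than `|w|`, the word `w` lies in `ζ^k(u)` for some `u` of length at
-- most two, hence in every `ζ^(k + K)(a)`, and one of these lies in every word of length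
-- `2 * q ^ (k + K)`.
lemma IsPrimitive.exists_mul_length_le_imp_infix (hprim : IsPrimitive ζ)
    (hζ : IsConstLenSubst ζ q) :
    ∃ R, ∀ w ∈ substLang ζ, ∀ W ∈ substLang ζ, R * w.length ≤ W.length → w <:+: W := by
  obtain ⟨K, hK⟩ := hprim.exists_forall_infix_iterate hζ 2
  refine ⟨2 * q ^ (K + 1), fun w hw W hW hlen => ?_⟩
  rcases eq_or_ne w [] with rfl | hne
  · exact List.nil_infix
  have hq : 1 < q := hζ.1
  have hblock (j : ℕ) (a : Bool) : ((substWord ζ)^[j] [a]).length = q ^ j := by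
    simp [hζ.length_iterate]
  set k := Nat.log q w.length + 1 with hk
  have hwk : w.length ≤ q ^ k := (Nat.lt_pow_succ_log_self hq _).le
  have hkw : q ^ k ≤ q * w.length := by
    rw [hk, pow_succ']
    exact Nat.mul_le_mul_left q (Nat.pow_log_le_self q (List.length_pos_iff.2 hne).ne')
  obtain ⟨v, hv, hwv⟩ := hprim.exists_mem_infix_iterate hζ hw k
  rw [iterate_substWord_eq_flatMap] at hwv
  obtain ⟨u, huv, hu, hwu⟩ := exists_infix_length_le_two_of_infix_flatMap (hblock k) hwv hwk
  obtain ⟨V, -, hWV⟩ := hprim.exists_mem_infix_iterate hζ hW (k + K)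
  rw [iterate_substWord_eq_flatMap] at hWV
  have hlong : 2 * q ^ (k + K) ≤ W.length :=
    calc 2 * q ^ (k + K) = 2 * q ^ K * q ^ k := by ring
      _ ≤ 2 * q ^ K * (q * w.length) := Nat.mul_le_mul_left _ hkw
      _ = 2 * q ^ (K + 1) * w.length := by ring
      _ ≤ W.length := hlen
  obtain ⟨a, -, haW⟩ := exists_infix_of_infix_flatMap (by positivity) (hblock (k + K)) hWV hlong
  have hua := iterate_substWord_infix (ζ := ζ) (hK u (mem_substLang_of_infix hv huv) hu a) k
  rw [← Function.iterate_add_apply, iterate_substWord_eq_flatMap ζ k u] at hua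
  exact hwu.trans (hua.trans haW)

lemma ofFn_embedSeq_mem_substLang {y : ℕ → Bool} (hy : y ∈ SubstShift ζ) (L i : ℕ) :
    List.ofFn (embedSeq L y i) ∈ substLang ζ := by
  refine mem_substLang_of_infix (hy (i + L)) (List.IsSuffix.isInfix ?_)
  rw [List.ofFn_add]
  exact List.suffix_append _ _

lemma exists_embedSeq_eq_of_ofFn_infix {α : Type*} {x y : ℕ → α} {L N i j : ℕ}
    (h : List.ofFn (embedSeq L x i) <:+: List.ofFn (embedSeq N y j)) :
    ∃ t ∈ Set.Icc j (j + N), embedSeq L y t = embedSeq L x i := by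
  obtain ⟨p, hp, heq⟩ := List.infix_iff_getElem?.1 h
  simp only [List.length_ofFn] at hp heq
  refine ⟨j + p, ⟨by omega, by omega⟩, embedSeq_eq_iff.2 fun s hs => ?_⟩
  have hs' : s + p < N := by omega
  simpa [embedSeq, hs', add_assoc, add_comm p s] using heq s hs

lemma IsPrimitive.exists_isLinearlyRecurrent (hprim : IsPrimitive ζ) (hζ : IsConstLenSubst ζ q)
    {y : ℕ → Bool} (hy : y ∈ SubstShift ζ) : ∃ R, IsLinearlyRecurrent R y := by
  obtain ⟨R, hR⟩ := hprim.exists_mul_length_le_imp_infix hζ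
  refine ⟨R, fun i j L => exists_embedSeq_eq_of_ofFn_infix ?_⟩
  exact hR _ (ofFn_embedSeq_mem_substLang hy L i) _ (ofFn_embedSeq_mem_substLang hy (R * L) j)
    (by simp only [List.length_ofFn, le_refl])

end Substitution

end RQA

theorem ratio_RRate_tendsto_one_general {α : Type*} {y : ℕ → α} {C : ℕ}
    (hy : IsLinearlyRecurrent C y) {m ℓ : ℕ} (hm : 1 ≤ m) (hℓ : 1 ≤ ℓ) :
    ∃ R R' : ℕ → ℝ,
      (∀ h : ℕ, 1 ≤ h →
        Tendsto (fun n : ℕ => RRate seqDist shift (embedSeq m y) n ((2:ℝ) ^ (-(h:ℤ))) ℓ)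
          atTop (𝓝 (R h)) ∧
        Tendsto (fun n : ℕ => RRate seqDist shift (embedSeq m y) n ((2:ℝ) ^ (-(h:ℤ))) (ℓ + 1))
          atTop (𝓝 (R' h))) ∧
      Tendsto (fun h : ℕ => R' h / R h) atTop (𝓝 1) := by
  choose c hc hlow using hy.exists_hasDens_matchSet_embedSeq
  have hpos (L : ℕ) : 0 < c L :=
    pos_of_mul_pos_right (one_pos.trans_le (hlow L)) (by positivity)
  have hsucc := tendsto_succ_div_of_antitone_sub_succ hpos (antitone_of_hasDens_matchSet hc)
    (antitone_sub_succ_of_hasDens_matchSet hc) hlow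
  refine ⟨_, _, fun h hh => ⟨tendsto_RRate hm hh hℓ hc, tendsto_RRate hm hh (by omega) hc⟩, ?_⟩
  have hshift (h : ℕ) : h + (m + (ℓ + 1) - 2) = h + (m + ℓ - 2) + 1 := by omega
  refine ((tendsto_ratio_of_tendsto_succ_div hpos hsucc ℓ).comp
    (tendsto_add_atTop_nat (m + ℓ - 2))).congr fun h => ?_
  simp only [Function.comp_apply, hshift]
  push_cast
  ring_nf

/-- for a primitive aperiodic binary substitution of constant length,
the asymptotic recurrence rates RR_ℓ(y^{(m)},∞,2^{-h}) exist and
RR_{ℓ+1}(y^{(m)},∞,2^{-h})/RR_ℓ(y^{(m)},∞,2^{-h}) → 1 as h → ∞. -/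
theorem ratio_RRate_tendsto_one
    (ζ : Bool → List Bool) (q : ℕ) (hζ : IsConstLenSubst ζ q)
    (hprim : IsPrimitive ζ) (hap : IsAperiodic ζ)
    (y : ℕ → Bool) (hy : y ∈ SubstShift ζ)
    (m ℓ : ℕ) (hm : 1 ≤ m) (hℓ : 1 ≤ ℓ) :
    ∃ R R' : ℕ → ℝ,
      (∀ h : ℕ, 1 ≤ h →
        Tendsto (fun n : ℕ => RRate seqDist shift (embedSeq m y) n ((2:ℝ) ^ (-(h:ℤ))) ℓ)
          atTop (𝓝 (R h)) ∧
        Tendsto (fun n : ℕ => RRate seqDist shift (embedSeq m y) n ((2:ℝ) ^ (-(h:ℤ))) (ℓ + 1))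
          atTop (𝓝 (R' h))) ∧
      Tendsto (fun h : ℕ => R' h / R h) atTop (𝓝 1) := by
  obtain ⟨C, hC⟩ := hprim.exists_isLinearlyRecurrent hζ hy
  exact ratio_RRate_tendsto_one_general hC hm hℓ
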